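/- arXiv:1210.7110 — 2 statements merged into one kernel-verified Lean document; each statement's English description precedes it below -/
import Mathlib

section
/- The Gaussian curvature defined by the Gauss map coincides with the curvature of the projected covariant derivative: for every p ∈ U, with g(p) = (cos α(p), sin α(p), −A(p)) and the cylinder coframe f̃¹_q(u) = −q₂u₁ + q₁u₂, f̃²_q(u) = u₃ + (1/2)(q₂u₁ − q₁u₂) evaluated at q = g(p), one has f̃¹(Dg_p(f₁(p)))·f̃²(Dg_p(f₂(p))) − f̃¹(Dg_p(f₂(p)))·f̃²(Dg_p(f₁(p))) = f¹_p( ∇_{f₁}(∇_{f₂} f₂)(p) − ∇_{f₂}(∇_{f₁} f₂)(p) − ∇_{[f₁,f₂]} f₂(p) ). -/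
open Real MeasureTheory

noncomputable section

/-- The Heisenberg group `ℍ¹` in exponential coordinates, as `ℝ³`. -/
abbrev H3 : Type := Fin 3 → ℝ

/-- Left invariant vector field `e₀`. -/
def E0 : H3 → H3 := fun _ => ![0, 0, 1]

/-- Left invariant vector field `e₁`. -/
def E1 : H3 → H3 := fun p => ![1, 0, -p 1 / 2]

/-- Left invariant vector field `e₂`. -/
def E2 : H3 → H3 := fun p => ![0, 1, p 0 / 2]

/-- Dual coframe element `e⁰` (the contact form). -/
def e0' (p v : H3) : ℝ := v 2 + (p 1 * v 0 - p 0 * v 1) / 2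

/-- Dual coframe element `e¹`. -/
def e1' (_p v : H3) : ℝ := v 0

/-- Dual coframe element `e²`. -/
def e2' (_p v : H3) : ℝ := v 1

/-- Lie bracket of vector fields on `ℝ³`. -/
def lie (V W : H3 → H3) (p : H3) : H3 :=
  fderiv ℝ W p (V p) - fderiv ℝ V p (W p)

/-- The adapted covariant derivative `∇̄_X Y`, for which the left invariant
frame `e₀, e₁, e₂` is parallel. -/
def nablaBar (X Y : H3 → H3) (p : H3) : H3 :=
  fderiv ℝ (fun q => e0' q (Y q)) p (X p) • E0 p
  + fderiv ℝ (fun q => Y q 0) p (X p) • E1 p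
  + fderiv ℝ (fun q => Y q 1) p (X p) • E2 p

/-- The horizontal normal `η = cos α · e₁ + sin α · e₂`. -/
def eta (α : H3 → ℝ) (p : H3) : H3 := cos (α p) • E1 p + sin (α p) • E2 p

/-- The characteristic field `f₁ = −sin α · e₁ + cos α · e₂`. -/
def F1 (α : H3 → ℝ) (p : H3) : H3 := (-sin (α p)) • E1 p + cos (α p) • E2 p

/-- The field `f₂ = e₀ + A·η`. -/
def F2 (α A : H3 → ℝ) (p : H3) : H3 := E0 p + A p • eta α p

/-- The horizontal conormal `η* = cos α · e¹ + sin α · e² − A·e⁰`. -/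
def etaStar (α A : H3 → ℝ) (p v : H3) : ℝ :=
  cos (α p) * e1' p v + sin (α p) * e2' p v - A p * e0' p v

/-- The 1-form `f¹ = −sin α · e¹ + cos α · e²`. -/
def f1' (α : H3 → ℝ) (p v : H3) : ℝ := -sin (α p) * e1' p v + cos (α p) * e2' p v

/-- The 1-form `f² = e⁰`. -/
def f2' (p v : H3) : ℝ := e0' p v

/-- The projected covariant derivative `∇_X Y = ∇̄_X Y − η*(∇̄_X Y)·η`. -/
def nablaP (α A : H3 → ℝ) (X Y : H3 → H3) (p : H3) : H3 :=
  nablaBar X Y p - etaStar α A p (nablaBar X Y p) • eta α p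

/-- The Gauss map `g(p) = (cos α(p), sin α(p), −A(p))`, with values in the cylinder. -/
def gaussMap (α A : H3 → ℝ) (p : H3) : H3 := ![cos (α p), sin (α p), -A p]

/-- The coframe element `f̃¹_q(u) = −q₂u₁ + q₁u₂` on the cylinder. -/
def ft1 (q u : H3) : ℝ := -q 1 * u 0 + q 0 * u 1

/-- The coframe element `f̃²_q(u) = e⁰_q(u)` on the cylinder. -/
def ft2 (q u : H3) : ℝ := u 2 + (q 1 * u 0 - q 0 * u 1) / 2

/-!
The projected connection restricted to the span of `f₁` and `f₂` has the connection form `A dα`: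
`∇_X f₁ = 0` and `∇_X f₂ = A dα(X) f₁`. Hence its curvature is
`R(X, Y) f₂ = d(A dα)(X, Y) f₁ = (dA ∧ dα)(X, Y) f₁`. On the other side, the Gauss map pulls `f̃¹`
back to `dα` and `f̃²` back to `-dA - dα / 2`, so it pulls `f̃¹ ∧ f̃²` back to
`-dα ∧ dA = dA ∧ dα`.
-/

open scoped Topology

/-- The curvature operator `R(X, Y)Z = ∇_X ∇_Y Z - ∇_Y ∇_X Z - ∇_{[X, Y]} Z` of the projected
covariant derivative. -/
def curvatureP (α A : H3 → ℝ) (X Y Z : H3 → H3) (p : H3) : H3 :=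
  nablaP α A X (nablaP α A Y Z) p - nablaP α A Y (nablaP α A X Z) p
    - nablaP α A (lie X Y) Z p

/-- The pullback `g*(f̃¹ ∧ f̃²)` of the area form of the cylinder by the Gauss map `g`, evaluated at
`p` on the vectors `v` and `w`. -/
def gaussMapPullbackArea (α A : H3 → ℝ) (p v w : H3) : ℝ :=
  ft1 (gaussMap α A p) (fderiv ℝ (gaussMap α A) p v)
      * ft2 (gaussMap α A p) (fderiv ℝ (gaussMap α A) p w)
    - ft1 (gaussMap α A p) (fderiv ℝ (gaussMap α A) p w)
      * ft2 (gaussMap α A p) (fderiv ℝ (gaussMap α A) p v)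

section

variable {α A h : H3 → ℝ} {X Y Z : H3 → H3} {p : H3}

lemma e0'_add (p v w : H3) : e0' p (v + w) = e0' p v + e0' p w := by
  simp only [e0', Pi.add_apply]
  ring

lemma e0'_smul (p : H3) (c : ℝ) (v : H3) : e0' p (c • v) = c * e0' p v := by
  simp only [e0', Pi.smul_apply, smul_eq_mul]
  ring

lemma e0'_E1 (p : H3) : e0' p (E1 p) = 0 := by
  simp [e0', E1, neg_div]

lemma e0'_E2 (p : H3) : e0' p (E2 p) = 0 := by
  simp [e0', E2, neg_div]

lemma e0'_eta (α : H3 → ℝ) (p : H3) : e0' p (eta α p) = 0 := by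
  rw [eta, e0'_add, e0'_smul, e0'_smul, e0'_E1, e0'_E2, mul_zero, mul_zero, add_zero]

lemma e0'_F1 (α : H3 → ℝ) (p : H3) : e0' p (F1 α p) = 0 := by
  rw [F1, e0'_add, e0'_smul, e0'_smul, e0'_E1, e0'_E2, mul_zero, mul_zero, add_zero]

lemma frame_expansion (p v : H3) : e0' p v • E0 p + v 0 • E1 p + v 1 • E2 p = v := by
  ext i
  fin_cases i
  · simp [E0, E1, E2]
  · simp [E0, E1, E2]
  · simp only [e0', E0, E1, E2, Fin.reduceFinMk, Pi.add_apply, Pi.smul_apply, Matrix.cons_val,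
      smul_eq_mul]
    ring

lemma etaStar_add (α A : H3 → ℝ) (p v w : H3) :
    etaStar α A p (v + w) = etaStar α A p v + etaStar α A p w := by
  simp only [etaStar, e1', e2', e0'_add, Pi.add_apply]
  ring

lemma etaStar_smul (α A : H3 → ℝ) (p : H3) (c : ℝ) (v : H3) :
    etaStar α A p (c • v) = c * etaStar α A p v := by
  simp only [etaStar, e1', e2', e0'_smul, Pi.smul_apply, smul_eq_mul]
  ring

lemma etaStar_eta (α A : H3 → ℝ) (p : H3) : etaStar α A p (eta α p) = 1 := by
  rw [etaStar, e0'_eta]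
  simp [eta, e1', e2', E1, E2, ← sq]

lemma etaStar_F1 (α A : H3 → ℝ) (p : H3) : etaStar α A p (F1 α p) = 0 := by
  rw [etaStar, e0'_F1]
  simp [F1, e1', e2', E1, E2, mul_comm]

lemma f1'_smul (α : H3 → ℝ) (p : H3) (c : ℝ) (v : H3) : f1' α p (c • v) = c * f1' α p v := by
  simp only [f1', e1', e2', Pi.smul_apply, smul_eq_mul]
  ring

lemma f1'_F1 (α : H3 → ℝ) (p : H3) : f1' α p (F1 α p) = 1 := by
  simp [f1', F1, e1', e2', E1, E2, ← sq]

@[fun_prop]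
lemma differentiable_E0 : Differentiable ℝ E0 := differentiable_const _

@[fun_prop]
lemma differentiable_E1 : Differentiable ℝ E1 := by
  refine differentiable_pi.2 fun i => ?_
  fin_cases i
  · exact differentiable_const _
  · exact differentiable_const _
  · change Differentiable ℝ fun q : H3 => -q 1 / 2
    fun_prop

@[fun_prop]
lemma differentiable_E2 : Differentiable ℝ E2 := by
  refine differentiable_pi.2 fun i => ?_
  fin_cases i
  · exact differentiable_const _
  · exact differentiable_const _
  · change Differentiable ℝ fun q : H3 => q 0 / 2
    fun_prop

@[fun_prop]
lemma differentiableAt_eta (hα : DifferentiableAt ℝ α p) : DifferentiableAt ℝ (eta α) p := by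
  unfold eta
  fun_prop

lemma differentiableAt_F1 (hα : DifferentiableAt ℝ α p) : DifferentiableAt ℝ (F1 α) p := by
  unfold F1
  fun_prop

lemma differentiableAt_F2 (hα : DifferentiableAt ℝ α p) (hA : DifferentiableAt ℝ A p) :
    DifferentiableAt ℝ (F2 α A) p := by
  unfold F2
  fun_prop

lemma differentiableAt_e0' (hY : DifferentiableAt ℝ Y p) :
    DifferentiableAt ℝ (fun q => e0' q (Y q)) p := by
  unfold e0'
  fun_prop

lemma nablaBar_congr (X : H3 → H3) (hYZ : Y =ᶠ[𝓝 p] Z) : nablaBar X Y p = nablaBar X Z p := by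
  have h0 : (fun q => e0' q (Y q)) =ᶠ[𝓝 p] fun q => e0' q (Z q) := hYZ.mono fun q hq => by
    simp only [hq]
  have h1 : (fun q => Y q 0) =ᶠ[𝓝 p] fun q => Z q 0 := hYZ.fun_comp (· 0)
  have h2 : (fun q => Y q 1) =ᶠ[𝓝 p] fun q => Z q 1 := hYZ.fun_comp (· 1)
  rw [nablaBar, nablaBar, h0.fderiv_eq, h1.fderiv_eq, h2.fderiv_eq]

lemma nablaBar_add (X : H3 → H3) (hY : DifferentiableAt ℝ Y p) (hZ : DifferentiableAt ℝ Z p) :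
    nablaBar X (fun q => Y q + Z q) p = nablaBar X Y p + nablaBar X Z p := by
  simp only [nablaBar, e0'_add, Pi.add_apply]
  rw [fderiv_fun_add (differentiableAt_e0' hY) (differentiableAt_e0' hZ),
    fderiv_fun_add (by fun_prop) (by fun_prop), fderiv_fun_add (by fun_prop) (by fun_prop)]
  simp only [add_apply]
  module

lemma nablaBar_smul (X : H3 → H3) (hh : DifferentiableAt ℝ h p) (hY : DifferentiableAt ℝ Y p) :
    nablaBar X (fun q => h q • Y q) p = fderiv ℝ h p (X p) • Y p + h p • nablaBar X Y p := by
  conv_rhs => rw [← frame_expansion p (Y p)]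
  simp only [nablaBar, e0'_smul, Pi.smul_apply, smul_eq_mul]
  rw [fderiv_fun_mul hh (differentiableAt_e0' hY), fderiv_fun_mul hh (by fun_prop),
    fderiv_fun_mul hh (by fun_prop)]
  simp only [add_apply, smul_apply, smul_eq_mul]
  module

lemma nablaBar_E0 (X : H3 → H3) (p : H3) : nablaBar X E0 p = 0 := by
  simp [nablaBar, e0', E0]

lemma nablaBar_E1 (X : H3 → H3) (p : H3) : nablaBar X E1 p = 0 := by
  simp only [nablaBar, e0'_E1]
  simp [E1]

lemma nablaBar_E2 (X : H3 → H3) (p : H3) : nablaBar X E2 p = 0 := by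
  simp only [nablaBar, e0'_E2]
  simp [E2]

lemma nablaBar_eta (X : H3 → H3) (hα : DifferentiableAt ℝ α p) :
    nablaBar X (eta α) p = fderiv ℝ α p (X p) • F1 α p := by
  unfold eta F1
  rw [nablaBar_add X (by fun_prop) (by fun_prop),
    nablaBar_smul X (by fun_prop) (by fun_prop), nablaBar_smul X (by fun_prop) (by fun_prop),
    nablaBar_E1, nablaBar_E2, fderiv_cos hα, fderiv_sin hα]
  simp only [smul_apply, smul_eq_mul]
  module

lemma nablaBar_F1 (X : H3 → H3) (hα : DifferentiableAt ℝ α p) :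
    nablaBar X (F1 α) p = -fderiv ℝ α p (X p) • eta α p := by
  unfold eta F1
  rw [nablaBar_add X (by fun_prop) (by fun_prop),
    nablaBar_smul X (by fun_prop) (by fun_prop), nablaBar_smul X (by fun_prop) (by fun_prop),
    nablaBar_E1, nablaBar_E2, fderiv_fun_neg, fderiv_cos hα, fderiv_sin hα]
  simp only [neg_apply, smul_apply, smul_eq_mul]
  module

lemma nablaBar_F2 (X : H3 → H3) (hα : DifferentiableAt ℝ α p) (hA : DifferentiableAt ℝ A p) :
    nablaBar X (F2 α A) p
      = fderiv ℝ A p (X p) • eta α p + (A p * fderiv ℝ α p (X p)) • F1 α p := by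
  unfold F2
  rw [nablaBar_add X (by fun_prop) (by fun_prop), nablaBar_E0, zero_add,
    nablaBar_smul X hA (by fun_prop), nablaBar_eta X hα, smul_smul]

lemma nablaP_congr (α A : H3 → ℝ) (X : H3 → H3) (hYZ : Y =ᶠ[𝓝 p] Z) :
    nablaP α A X Y p = nablaP α A X Z p := by
  rw [nablaP, nablaP, nablaBar_congr X hYZ]

lemma nablaP_smul (α A : H3 → ℝ) (X : H3 → H3) (hh : DifferentiableAt ℝ h p)
    (hY : DifferentiableAt ℝ Y p) :
    nablaP α A X (fun q => h q • Y q) p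
      = fderiv ℝ h p (X p) • (Y p - etaStar α A p (Y p) • eta α p) + h p • nablaP α A X Y p := by
  rw [nablaP, nablaP, nablaBar_smul X hh hY, etaStar_add, etaStar_smul, etaStar_smul]
  module

lemma nablaP_F1 (A : H3 → ℝ) (X : H3 → H3) (hα : DifferentiableAt ℝ α p) :
    nablaP α A X (F1 α) p = 0 := by
  rw [nablaP, nablaBar_F1 X hα, etaStar_smul, etaStar_eta, mul_one, sub_self]

lemma nablaP_F2 (X : H3 → H3) (hα : DifferentiableAt ℝ α p) (hA : DifferentiableAt ℝ A p) :
    nablaP α A X (F2 α A) p = (A p * fderiv ℝ α p (X p)) • F1 α p := by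
  rw [nablaP, nablaBar_F2 X hα hA, etaStar_add, etaStar_smul, etaStar_smul, etaStar_eta,
    etaStar_F1, mul_one, mul_zero, add_zero, add_sub_cancel_left]

lemma nablaP_nablaP_F2 (X : H3 → H3) (hα : ContDiffAt ℝ 2 α p)
    (hA : ∀ᶠ q in 𝓝 p, DifferentiableAt ℝ A q) (hY : DifferentiableAt ℝ Y p) :
    nablaP α A X (nablaP α A Y (F2 α A)) p
      = (A p * fderiv ℝ (fun q => fderiv ℝ α q (Y q)) p (X p)
          + fderiv ℝ α p (Y p) * fderiv ℝ A p (X p)) • F1 α p := by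
  have hα_near : ∀ᶠ q in 𝓝 p, DifferentiableAt ℝ α q :=
    (hα.eventually (by simp)).mono fun q hq => hq.differentiableAt two_ne_zero
  have hαp : DifferentiableAt ℝ α p := hα_near.self_of_nhds
  have hAp : DifferentiableAt ℝ A p := hA.self_of_nhds
  have hαY : DifferentiableAt ℝ (fun q => fderiv ℝ α q (Y q)) p :=
    ((hα.fderiv_right (m := 1) (by norm_num)).differentiableAt one_ne_zero).clm_apply hY
  have nablaP_Y_near : nablaP α A Y (F2 α A)
      =ᶠ[𝓝 p] fun q => (A q * fderiv ℝ α q (Y q)) • F1 α q := by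
    filter_upwards [hα_near, hA] with q hαq hAq using nablaP_F2 Y hαq hAq
  rw [nablaP_congr α A X nablaP_Y_near,
    nablaP_smul α A X (hAp.fun_mul hαY) (differentiableAt_F1 hαp), nablaP_F1 A X hαp,
    etaStar_F1, fderiv_fun_mul hAp hαY]
  simp

theorem curvatureP_F2 (hα : ContDiffAt ℝ 2 α p) (hA : ∀ᶠ q in 𝓝 p, DifferentiableAt ℝ A q)
    (hX : DifferentiableAt ℝ X p) (hY : DifferentiableAt ℝ Y p) :
    curvatureP α A X Y (F2 α A) p
      = (fderiv ℝ A p (X p) * fderiv ℝ α p (Y p) - fderiv ℝ A p (Y p) * fderiv ℝ α p (X p))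
          • F1 α p := by
  have fderiv_lie : fderiv ℝ α p (lie X Y p)
      = fderiv ℝ (fun q => fderiv ℝ α q (Y q)) p (X p)
        - fderiv ℝ (fun q => fderiv ℝ α q (X q)) p (Y p) :=
    VectorField.fderiv_apply_lieBracket hα (by simp) hY hX
  rw [curvatureP, nablaP_nablaP_F2 X hα hA hY, nablaP_nablaP_F2 Y hα hA hX,
    nablaP_F2 _ (hα.differentiableAt two_ne_zero) hA.self_of_nhds, fderiv_lie]
  module

lemma hasFDerivAt_gaussMap (hα : DifferentiableAt ℝ α p) (hA : DifferentiableAt ℝ A p) :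
    HasFDerivAt (gaussMap α A)
      (ContinuousLinearMap.pi ![-sin (α p) • fderiv ℝ α p, cos (α p) • fderiv ℝ α p,
        -fderiv ℝ A p]) p := by
  refine hasFDerivAt_pi'.2 fun i => ?_
  fin_cases i
  · exact hα.hasFDerivAt.cos
  · exact hα.hasFDerivAt.sin
  · exact hA.hasFDerivAt.neg

lemma ft1_fderiv_gaussMap (hα : DifferentiableAt ℝ α p) (hA : DifferentiableAt ℝ A p) (v : H3) :
    ft1 (gaussMap α A p) (fderiv ℝ (gaussMap α A) p v) = fderiv ℝ α p v := by
  simp only [(hasFDerivAt_gaussMap hα hA).fderiv, ft1, gaussMap, ContinuousLinearMap.pi_apply,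
    Matrix.cons_val, smul_apply, smul_eq_mul]
  linear_combination fderiv ℝ α p v * sin_sq_add_cos_sq (α p)

lemma ft2_fderiv_gaussMap (hα : DifferentiableAt ℝ α p) (hA : DifferentiableAt ℝ A p) (v : H3) :
    ft2 (gaussMap α A p) (fderiv ℝ (gaussMap α A) p v)
      = -fderiv ℝ A p v - fderiv ℝ α p v / 2 := by
  simp only [(hasFDerivAt_gaussMap hα hA).fderiv, ft2, gaussMap, ContinuousLinearMap.pi_apply,
    Matrix.cons_val, smul_apply, neg_apply, smul_eq_mul]
  linear_combination -(fderiv ℝ α p v / 2) * sin_sq_add_cos_sq (α p)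

theorem gaussMapPullbackArea_eq (hα : DifferentiableAt ℝ α p) (hA : DifferentiableAt ℝ A p)
    (v w : H3) :
    gaussMapPullbackArea α A p v w
      = fderiv ℝ A p v * fderiv ℝ α p w - fderiv ℝ A p w * fderiv ℝ α p v := by
  simp only [gaussMapPullbackArea, ft1_fderiv_gaussMap hα hA, ft2_fderiv_gaussMap hα hA]
  ring

theorem gaussMap_curvature_eq_nablaP_curvature_general (hα : ContDiffAt ℝ 2 α p)
    (hA : ∀ᶠ q in 𝓝 p, DifferentiableAt ℝ A q) (hX : DifferentiableAt ℝ X p)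
    (hY : DifferentiableAt ℝ Y p) :
    gaussMapPullbackArea α A p (X p) (Y p) = f1' α p (curvatureP α A X Y (F2 α A) p) := by
  rw [gaussMapPullbackArea_eq (hα.differentiableAt two_ne_zero) hA.self_of_nhds,
    curvatureP_F2 hα hA hX hY, f1'_smul, f1'_F1, mul_one]

end

/-- The Gaussian curvature defined by the Gauss map coincides with the curvature of
the projected covariant derivative:
`(g*(f̃¹∧f̃²))(f₁,f₂) = f¹(R(f₁,f₂)f₂)`. -/
theorem gaussMap_curvature_eq_nablaP_curvature (U : Set H3) (hU : IsOpen U)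
    (α A : H3 → ℝ) (hα : ContDiffOn ℝ (⊤ : ℕ∞) α U) (hA : ContDiffOn ℝ (⊤ : ℕ∞) A U) :
    ∀ p ∈ U,
      ft1 (gaussMap α A p) (fderiv ℝ (gaussMap α A) p (F1 α p))
          * ft2 (gaussMap α A p) (fderiv ℝ (gaussMap α A) p (F2 α A p))
        - ft1 (gaussMap α A p) (fderiv ℝ (gaussMap α A) p (F2 α A p))
          * ft2 (gaussMap α A p) (fderiv ℝ (gaussMap α A) p (F1 α p))
      = f1' α p
          (nablaP α A (F1 α) (fun q => nablaP α A (F2 α A) (F2 α A) q) p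
            - nablaP α A (F2 α A) (fun q => nablaP α A (F1 α) (F2 α A) q) p
            - nablaP α A (lie (F1 α) (F2 α A)) (F2 α A) p) := by
  intro p hp
  have hα2 : ContDiffAt ℝ 2 α p := (contDiffOn_infty.1 hα 2).contDiffAt (hU.mem_nhds hp)
  have hA_near : ∀ᶠ q in 𝓝 p, DifferentiableAt ℝ A q :=
    (hA.differentiableOn (by simp)).eventually_differentiableAt (hU.mem_nhds hp)
  have hαp : DifferentiableAt ℝ α p := hα2.differentiableAt two_ne_zero
  exact gaussMap_curvature_eq_nablaP_curvature_general hα2 hA_near (differentiableAt_F1 hαp)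
    (differentiableAt_F2 hαp hA_near.self_of_nhds)
end
end

section
/- For every smooth vector field X on U and p ∈ U, the adapted covariant derivative of the horizontal conormal is ∇̄_X η*(p) = dα_p(X(p))·f¹_p − dA_p(X(p))·f²_p, so the second fundamental form V(X,Y) := −(∇̄_X η*)(Y) satisfies V(X,Y)(p) = −dα_p(X(p))·f¹_p(Y(p)) + dA_p(X(p))·f²_p(Y(p)); moreover, if Y is tangent (η*_p(Y(p)) = 0 for all p), then ∇̄_X Y = ∇_X Y + V(X,Y)·η on U. -/
open Real MeasureTheory

noncomputable section

/-- The adapted covariant derivative of a 1-form `θ = c₀e⁰ + c₁e¹ + c₂e²`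
along `X`: `∇̄_X θ = X(c₀)e⁰ + X(c₁)e¹ + X(c₂)e²`, with the components
recovered by evaluating `θ` on the frame, `c₀ = θ(e₀)`, `c₁ = θ(e₁)`, `c₂ = θ(e₂)`. -/
def nablaBarForm (X : H3 → H3) (θ : H3 → H3 → ℝ) (p v : H3) : ℝ :=
  fderiv ℝ (fun q => θ q (E0 q)) p (X p) * e0' p v
  + fderiv ℝ (fun q => θ q (E1 q)) p (X p) * e1' p v
  + fderiv ℝ (fun q => θ q (E2 q)) p (X p) * e2' p v

lemma sum_coframe_smul_frame (p v : H3) :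
    e0' p v • E0 p + e1' p v • E1 p + e2' p v • E2 p = v := by
  ext i
  fin_cases i
  · simp [e1', E0, E1, E2]
  · simp [e2', E0, E1, E2]
  · change e0' p v * 1 + v 0 * (-p 1 / 2) + v 1 * (p 0 / 2) = v 2
    unfold e0'
    ring

lemma form_apply_eq_sum_coframe {θ : H3 → H3 → ℝ} (p : H3) (hθ : IsLinearMap ℝ (θ p)) (v : H3) :
    θ p v = θ p (E0 p) * e0' p v + θ p (E1 p) * e1' p v + θ p (E2 p) * e2' p v := by
  conv_lhs => rw [← sum_coframe_smul_frame p v]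
  simp only [hθ.map_add, hθ.map_smul, smul_eq_mul, mul_comm]

lemma differentiableAt_e0'_apply {Y : H3 → H3} {p : H3} (hY : DifferentiableAt ℝ Y p) :
    DifferentiableAt ℝ (fun q => e0' q (Y q)) p := by
  unfold e0'
  fun_prop

lemma nablaBar_leibniz {θ : H3 → H3 → ℝ} (X : H3 → H3) {Y : H3 → H3} {p : H3}
    (hθ : ∀ q, IsLinearMap ℝ (θ q))
    (hθ₀ : DifferentiableAt ℝ (fun q => θ q (E0 q)) p)
    (hθ₁ : DifferentiableAt ℝ (fun q => θ q (E1 q)) p)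
    (hθ₂ : DifferentiableAt ℝ (fun q => θ q (E2 q)) p) (hY : DifferentiableAt ℝ Y p) :
    fderiv ℝ (fun q => θ q (Y q)) p (X p)
      = nablaBarForm X θ p (Y p) + θ p (nablaBar X Y p) := by
  have hY₀ := differentiableAt_e0'_apply hY
  have hY₁ : DifferentiableAt ℝ (fun q => Y q 0) p := differentiableAt_pi.1 hY 0
  have hY₂ : DifferentiableAt ℝ (fun q => Y q 1) p := differentiableAt_pi.1 hY 1
  have expansion : (fun q => θ q (Y q)) = fun q =>
      θ q (E0 q) * e0' q (Y q) + θ q (E1 q) * Y q 0 + θ q (E2 q) * Y q 1 :=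
    funext fun q => form_apply_eq_sum_coframe q (hθ q) (Y q)
  have product_rule := ((hθ₀.hasFDerivAt.fun_mul hY₀.hasFDerivAt).fun_add
    (hθ₁.hasFDerivAt.fun_mul hY₁.hasFDerivAt)).fun_add (hθ₂.hasFDerivAt.fun_mul hY₂.hasFDerivAt)
  rw [expansion, product_rule.fderiv]
  simp only [nablaBarForm, nablaBar, e1', e2', (hθ p).map_add, (hθ p).map_smul, add_apply,
    smul_apply, smul_eq_mul]
  ring

lemma isLinearMap_etaStar (α A : H3 → ℝ) (p : H3) : IsLinearMap ℝ (etaStar α A p) where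
  map_add v w := by
    simp only [etaStar, e0', e1', e2', Pi.add_apply]
    ring
  map_smul c v := by
    simp only [etaStar, e0', e1', e2', Pi.smul_apply, smul_eq_mul]
    ring

lemma etaStar_E0 (α A : H3 → ℝ) (p : H3) : etaStar α A p (E0 p) = -A p := by
  simp [etaStar, E0, e0', e1', e2']

lemma etaStar_E1 (α A : H3 → ℝ) (p : H3) : etaStar α A p (E1 p) = cos (α p) := by
  simp [etaStar, E1, e0', e1', e2', neg_div]

lemma etaStar_E2 (α A : H3 → ℝ) (p : H3) : etaStar α A p (E2 p) = sin (α p) := by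
  simp [etaStar, E2, e0', e1', e2', neg_div]

lemma nablaBarForm_etaStar {α : H3 → ℝ} (A : H3 → ℝ) (X : H3 → H3) {p : H3}
    (hα : DifferentiableAt ℝ α p) (v : H3) :
    nablaBarForm X (etaStar α A) p v
      = fderiv ℝ α p (X p) * f1' α p v - fderiv ℝ A p (X p) * f2' p v := by
  simp only [nablaBarForm, etaStar_E0, etaStar_E1, etaStar_E2, f1', f2', fderiv_fun_neg,
    hα.hasFDerivAt.cos.fderiv, hα.hasFDerivAt.sin.fderiv, neg_apply, smul_apply, smul_eq_mul]
  ring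

lemma etaStar_nablaBar {α A : H3 → ℝ} (X : H3 → H3) {Y : H3 → H3} {p : H3}
    (hα : DifferentiableAt ℝ α p) (hA : DifferentiableAt ℝ A p) (hY : DifferentiableAt ℝ Y p) :
    etaStar α A p (nablaBar X Y p)
      = fderiv ℝ (fun q => etaStar α A q (Y q)) p (X p)
        - nablaBarForm X (etaStar α A) p (Y p) := by
  have leibniz := nablaBar_leibniz X (isLinearMap_etaStar α A)
    (by simpa only [etaStar_E0] using hA.fun_neg) (by simpa only [etaStar_E1] using hα.cos)
    (by simpa only [etaStar_E2] using hα.sin) hY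
  exact eq_sub_of_add_eq' leibniz.symm

/- Differentiating `η*(Y) = 0` along `X` shows that the `η`-component of `∇̄_X Y` is
`-(∇̄_X η*)(Y)`. -/
lemma nablaBar_eq_nablaP_add_of_tangent {α A : H3 → ℝ} (X : H3 → H3) {Y : H3 → H3} {p : H3}
    (hα : DifferentiableAt ℝ α p) (hA : DifferentiableAt ℝ A p) (hY : DifferentiableAt ℝ Y p)
    (tangent : ∀ᶠ q in nhds p, etaStar α A q (Y q) = 0) :
    nablaBar X Y p
      = nablaP α A X Y p + (-(nablaBarForm X (etaStar α A) p (Y p))) • eta α p := by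
  have derivative_zero : fderiv ℝ (fun q => etaStar α A q (Y q)) p (X p) = 0 := by
    rw [Filter.EventuallyEq.fderiv_eq (f := fun _ => (0 : ℝ)) tangent, fderiv_fun_const,
      Pi.zero_apply, zero_apply]
  rw [nablaP, etaStar_nablaBar X hα hA hY, derivative_zero, zero_sub, sub_add_cancel]

theorem nablaBar_etaStar_general {U : Set H3} (hU : IsOpen U) {α A : H3 → ℝ}
    (hα : DifferentiableOn ℝ α U) (hA : DifferentiableOn ℝ A U)
    (X : H3 → H3) {Y : H3 → H3} (hY : DifferentiableOn ℝ Y U) :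
    ∀ p ∈ U,
      (∀ v : H3, nablaBarForm X (etaStar α A) p v
          = fderiv ℝ α p (X p) * f1' α p v - fderiv ℝ A p (X p) * f2' p v)
      ∧ (∀ v : H3, -(nablaBarForm X (etaStar α A) p v)
          = -(fderiv ℝ α p (X p)) * f1' α p v + fderiv ℝ A p (X p) * f2' p v)
      ∧ ((∀ q ∈ U, etaStar α A q (Y q) = 0) →
          nablaBar X Y p
            = nablaP α A X Y p + (-(nablaBarForm X (etaStar α A) p (Y p))) • eta α p) := by
  intro p hp
  have hUp : U ∈ nhds p := hU.mem_nhds hp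
  have conormal := nablaBarForm_etaStar A X (hα.differentiableAt hUp)
  refine ⟨conormal, fun v => ?_, fun tangent => ?_⟩
  · rw [conormal]
    ring
  · exact nablaBar_eq_nablaP_add_of_tangent X (hα.differentiableAt hUp)
      (hA.differentiableAt hUp) (hY.differentiableAt hUp) (Filter.eventually_of_mem hUp tangent)

/-- `∇̄_X η* = dα(X)·f¹ − dA(X)·f²`; hence the second fundamental form
`V(X,Y) = −(∇̄_X η*)(Y)` is `V(X,Y) = −dα(X)·f¹(Y) + dA(X)·f²(Y)`; moreover
for tangent `Y`, `∇̄_X Y = ∇_X Y + V(X,Y)·η`. -/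
theorem nablaBar_etaStar (U : Set H3) (hU : IsOpen U) (α A : H3 → ℝ)
    (hα : ContDiffOn ℝ (⊤ : ℕ∞) α U) (hA : ContDiffOn ℝ (⊤ : ℕ∞) A U)
    (X Y : H3 → H3) (hX : ContDiffOn ℝ (⊤ : ℕ∞) X U) (hY : ContDiffOn ℝ (⊤ : ℕ∞) Y U) :
    ∀ p ∈ U,
      (∀ v : H3, nablaBarForm X (etaStar α A) p v
          = fderiv ℝ α p (X p) * f1' α p v - fderiv ℝ A p (X p) * f2' p v)
      ∧ (∀ v : H3, -(nablaBarForm X (etaStar α A) p v)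
          = -(fderiv ℝ α p (X p)) * f1' α p v + fderiv ℝ A p (X p) * f2' p v)
      ∧ ((∀ q ∈ U, etaStar α A q (Y q) = 0) →
          nablaBar X Y p
            = nablaP α A X Y p + (-(nablaBarForm X (etaStar α A) p (Y p))) • eta α p) :=
  nablaBar_etaStar_general hU (hα.differentiableOn (by simp)) (hA.differentiableOn (by simp))
    X (hY.differentiableOn (by simp))
end
end
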